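/- Let Y be a finite-dimensional Banach space, A a nonempty bounded, closed, convex subset of Y, and (ζ, ρ) a complete metric space. Let C : A → ζ be a compact mapping and let T : A × C(A) → Y be a Kannan type equicontraction mapping such that the mapping η : A → A defined by η(u) = T(u, C(u)) is well defined (maps A into A) and continuous. Then the equation T(u, C(u)) = u has a solution u ∈ A. -/

import Mathlib

/-!
The theorem is Brouwer's fixed point theorem for `η u = T u (C u)`, proved by Milnor's volume
argument as simplified by Rogers. If `G` were a `C¹` retraction of a convex body `s` onto its
frontier, put `h = G - id`. For small `r` the map `x ↦ x + r • h x` is a Lipschitz perturbation of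
the identity fixing the frontier, hence permutes `s`, so that `∫ x in s, det (1 + r • Dh x)` is the
volume of `s`. This integral is a polynomial in `r`, so it equals the volume at `r = 1` too; but
there the integrand is `det DG = 0`, because `G` maps into a set with empty interior.

A compactly supported map `f` without fixed points can be taken `C¹`, and normalizing `x - f x` then
gives such a retraction of a large ball. The nearest-point retraction and a cutoff reduce the case
of compact convex sets to this one.
-/

open Filter Function Metric MeasureTheory Polynomial Set Topology

section Polynomials

theorem exists_polynomial_eval_eq_integral {α : Type*} [MeasurableSpace α] {μ : Measure α}
    {p : α → ℝ[X]} {n : ℕ} (hdeg : ∀ x, (p x).natDegree ≤ n)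
    (hint : ∀ r, Integrable (fun x => (p x).eval r) μ) :
    ∃ P : ℝ[X], ∀ r, P.eval r = ∫ x, (p x).eval r ∂μ := by
  let nodes := Finset.range (n + 1)
  have hinj : InjOn (fun i : ℕ => (i : ℝ)) nodes := Nat.cast_injective.injOn
  have interpolate (x : α) (r : ℝ) :
      (p x).eval r = ∑ i ∈ nodes, (p x).eval (i : ℝ) * (Lagrange.basis nodes (↑) i).eval r := by
    have hlt : (p x).degree < nodes.card := by
      rw [Finset.card_range]
      exact degree_le_natDegree.trans_lt (by exact_mod_cast Nat.lt_succ_of_le (hdeg x))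
    conv_lhs => rw [Lagrange.eq_interpolate hinj hlt]
    simp only [Lagrange.interpolate_apply, eval_finsetSum, eval_mul, eval_C]
  refine ⟨Lagrange.interpolate nodes (↑) fun i => ∫ x, (p x).eval (i : ℝ) ∂μ, fun r => ?_⟩
  simp only [interpolate _ r, Lagrange.interpolate_apply, eval_finsetSum, eval_mul, eval_C,
    integral_finsetSum nodes fun i _ => (hint i).mul_const _, integral_mul_const]

theorem eval_det_X_smul_map_C_add_map_C {R n : Type*} [CommRing R] [Fintype n] [DecidableEq n]
    (A B : Matrix n n R) (r : R) :
    ((X : R[X]) • A.map C + B.map C).det.eval r = (r • A + B).det := by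
  rw [← coe_evalRingHom, RingHom.map_det]
  congr 1
  ext i j
  simp only [RingHom.mapMatrix_apply, coe_evalRingHom, Matrix.map_apply, Matrix.add_apply,
    Matrix.smul_apply, smul_eq_mul, eval_add, eval_mul, eval_C, eval_X]

theorem exists_polynomial_eval_eq_det_one_add_smul {R M : Type*} [CommRing R] [Nontrivial R]
    [AddCommGroup M] [Module R M] [Module.Free R M] [Module.Finite R M] (f : M →ₗ[R] M) :
    ∃ P : R[X], P.natDegree ≤ Module.finrank R M ∧ ∀ r, P.eval r = LinearMap.det (1 + r • f) := by
  let b := Module.finBasis R M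
  have degree_le := natDegree_det_X_add_C_le (LinearMap.toMatrix b b f) 1
  rw [Fintype.card_fin] at degree_le
  refine ⟨_, degree_le, fun r => ?_⟩
  rw [eval_det_X_smul_map_C_add_map_C, ← LinearMap.det_toMatrix b, map_add, map_smul,
    LinearMap.toMatrix_one, add_comm]

end Polynomials

section Perturbation

theorem bijective_id_add_of_lipschitzWith {E : Type*} [NormedAddCommGroup E] [CompleteSpace E]
    {h : E → E} {K : NNReal} (hK : K < 1) (hh : LipschitzWith K h) :
    Bijective fun x => x + h x := by
  have contracting (y : E) : ContractingWith K fun x => y - h x :=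
    ⟨hK, LipschitzWith.of_dist_le_mul fun a b => by
      simpa only [dist_sub_left] using hh.dist_le_mul a b⟩
  constructor
  · intro a b hab
    refine (contracting (a + h a)).fixedPoint_unique' (eq_sub_of_add_eq rfl).symm ?_
    exact (eq_sub_of_add_eq hab.symm).symm
  · intro y
    exact ⟨_, add_eq_of_eq_sub (contracting y).fixedPoint_isFixedPt.symm⟩

variable {E : Type*} [NormedAddCommGroup E] [NormedSpace ℝ E]

theorem eventually_forall_det_one_add_smul_pos {S : Set (E →L[ℝ] E)} (hS : IsCompact S) :
    ∀ᶠ r in 𝓝 (0 : ℝ), ∀ M ∈ S, 0 < (1 + r • M).det := by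
  refine hS.eventually_forall_of_forall_eventually fun M _ => ?_
  have continuous_det : Continuous fun z : ℝ × (E →L[ℝ] E) => (1 + z.1 • z.2).det :=
    ContinuousLinearMap.continuous_det.comp (by fun_prop)
  have det_at_zero : (1 + (0 : ℝ) • M).det = 1 := by
    rw [zero_smul, add_zero]
    exact LinearMap.det_id
  exact continuous_det.continuousAt.eventually_const_lt (one_pos.trans_eq det_at_zero.symm)

variable [FiniteDimensional ℝ E] {s : Set E} {K : NNReal}

theorem lipschitzWith_indicator_of_eqOn_frontier {F : Type*} [SeminormedAddCommGroup F] {h : E → F}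
    (hs : IsClosed s) (hh : LipschitzOnWith K h s) (h0 : EqOn h 0 (frontier s)) :
    LipschitzWith K (s.indicator h) := by
  have inside_outside {x y : E} (hx : x ∈ s) (hy : y ∉ s) : ‖h x‖ ≤ K * dist x y := by
    obtain ⟨z, hz, hxz⟩ :=
      exists_mem_frontier_infDist_compl_eq_dist hx fun hs => hy (hs ▸ mem_univ y)
    calc ‖h x‖ = dist (h x) (h z) := by rw [h0 hz, Pi.zero_apply, dist_zero_right]
      _ ≤ K * dist x z := hh.dist_le_mul x hx z (hs.frontier_subset hz)
      _ ≤ K * dist x y := by gcongr; exact hxz ▸ infDist_le_dist_of_mem hy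
  refine LipschitzWith.of_dist_le_mul fun x y => ?_
  by_cases hx : x ∈ s <;> by_cases hy : y ∈ s
  · simpa only [indicator_of_mem, hx, hy] using hh.dist_le_mul x hx y hy
  · simpa only [indicator_of_mem hx, indicator_of_notMem hy, dist_zero_right]
      using inside_outside hx hy
  · rw [dist_comm, dist_comm x y]
    simpa only [indicator_of_notMem hx, indicator_of_mem hy, dist_zero_right]
      using inside_outside hy hx
  · simp only [indicator_of_notMem, hx, hy, not_false_eq_true, dist_self]
    positivity

theorem bijOn_id_add_of_lipschitzOnWith {h : E → E} (hs : IsClosed s) (hK : K < 1)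
    (hh : LipschitzOnWith K h s) (h0 : EqOn h 0 (frontier s)) :
    BijOn (fun x => x + h x) s s := by
  have : CompleteSpace E := FiniteDimensional.complete ℝ E
  have bijective := bijective_id_add_of_lipschitzWith hK
    (lipschitzWith_indicator_of_eqOn_frontier hs hh h0)
  have fixes_compl : EqOn (fun x => x + s.indicator h x) id sᶜ := fun x hx => by
    simp only [indicator_of_notMem hx, add_zero, id_eq]
  have image_eq : (fun x => x + s.indicator h x) '' s = s := by
    rw [← compl_inj_iff, ← image_compl_eq bijective, fixes_compl.image_eq, image_id]
  refine BijOn.congr ⟨mapsTo_iff_image_subset.2 image_eq.subset, bijective.injective.injOn,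
    image_eq.superset⟩ fun x hx => ?_
  simp only [indicator_of_mem hx]

end Perturbation

section Volume

variable {E : Type*} [NormedAddCommGroup E] [NormedSpace ℝ E] [FiniteDimensional ℝ E]
  {s : Set E} {h : E → E}

section Measure

variable [MeasurableSpace E] [BorelSpace E] (μ : Measure E) [μ.IsAddHaarMeasure]

theorem eventually_setIntegral_det_one_add_smul_fderivWithin (hs : IsCompact s)
    (hconv : Convex ℝ s) (hint : (interior s).Nonempty) (hh : ContDiffOn ℝ 1 h s)
    (h0 : EqOn h 0 (frontier s)) :
    ∀ᶠ r in 𝓝 (0 : ℝ), ∫ x in s, (1 + r • fderivWithin ℝ h s x).det ∂μ = μ.real s := by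
  obtain ⟨K, hK⟩ := hh.exists_lipschitzOnWith one_ne_zero hconv hs
  have derivative_continuous : ContinuousOn (fderivWithin ℝ h s) s :=
    hh.continuousOn_fderivWithin (uniqueDiffOn_convex hconv hint) le_rfl
  have lipschitz_small : ∀ᶠ r in 𝓝 (0 : ℝ), ‖r‖₊ * K < 1 :=
    (by fun_prop : Continuous fun r : ℝ => ‖r‖₊ * K).continuousAt.eventually_lt_const (by simp)
  filter_upwards [lipschitz_small, eventually_forall_det_one_add_smul_pos
    (hs.image_of_continuousOn derivative_continuous)] with r hrK hdet
  have bijOn : BijOn (fun x => x + r • h x) s s := by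
    refine bijOn_id_add_of_lipschitzOnWith hs.isClosed hrK
      ((lipschitzWith_smul r).comp_lipschitzOnWith hK) fun x hx => ?_
    simp only [h0 hx, Pi.zero_apply, smul_zero]
  have derivative (x : E) (hx : x ∈ s) :
      HasFDerivWithinAt (fun x => x + r • h x) (1 + r • fderivWithin ℝ h s x) s x :=
    (hasFDerivWithinAt_id x s).add
      ((hh.differentiableOn one_ne_zero x hx).hasFDerivWithinAt.const_smul r)
  calc ∫ x in s, (1 + r • fderivWithin ℝ h s x).det ∂μ
      = ∫ x in s, |(1 + r • fderivWithin ℝ h s x).det| • (1 : ℝ) ∂μ :=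
        setIntegral_congr_fun hs.measurableSet fun x hx => by
          rw [smul_eq_mul, mul_one, abs_of_pos (hdet _ (mem_image_of_mem _ hx))]
    _ = ∫ _ in (fun x => x + r • h x) '' s, (1 : ℝ) ∂μ :=
        (integral_image_eq_integral_abs_det_fderiv_smul μ hs.measurableSet derivative bijOn.injOn
          fun _ => 1).symm
    _ = μ.real s := by rw [bijOn.image_eq, setIntegral_const, smul_eq_mul, mul_one]

theorem setIntegral_det_one_add_fderivWithin (hs : IsCompact s) (hconv : Convex ℝ s)
    (hint : (interior s).Nonempty) (hh : ContDiffOn ℝ 1 h s) (h0 : EqOn h 0 (frontier s)) :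
    ∫ x in s, (1 + fderivWithin ℝ h s x).det ∂μ = μ.real s := by
  have derivative_continuous : ContinuousOn (fderivWithin ℝ h s) s :=
    hh.continuousOn_fderivWithin (uniqueDiffOn_convex hconv hint) le_rfl
  choose p hdeg hp using fun x =>
    exists_polynomial_eval_eq_det_one_add_smul (fderivWithin ℝ h s x : E →ₗ[ℝ] E)
  replace hp (x : E) (r : ℝ) : (p x).eval r = (1 + r • fderivWithin ℝ h s x).det := hp x r
  have integrable (r : ℝ) : IntegrableOn (fun x => (p x).eval r) s μ := by
    simp only [hp]
    exact (ContinuousLinearMap.continuous_det.comp_continuousOn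
      (continuousOn_const.add (derivative_continuous.const_smul r))).integrableOn_compact hs
  obtain ⟨P, hP⟩ := exists_polynomial_eval_eq_integral hdeg integrable
  have eval_near_zero : ∀ᶠ r in 𝓝 (0 : ℝ), P.eval r = (C (μ.real s)).eval r := by
    simpa only [hP, hp, eval_C] using
      eventually_setIntegral_det_one_add_smul_fderivWithin μ hs hconv hint hh h0
  have constant : P = C (μ.real s) :=
    eq_of_infinite_eval_eq _ _ (infinite_of_mem_nhds 0 eval_near_zero)
  simpa only [hp, one_smul, constant, eval_C] using (hP 1).symm

end Measure

theorem det_eq_zero_of_hasStrictFDerivAt_of_eventually_mem {𝕜 E : Type*} [NontriviallyNormedField 𝕜]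
    [CompleteSpace 𝕜] [NormedAddCommGroup E] [NormedSpace 𝕜 E] [FiniteDimensional 𝕜 E] {G : E → E}
    {G' : E →L[𝕜] E} {x : E} {t : Set E} (hG : HasStrictFDerivAt G G' x)
    (ht : interior t = ∅) (hmem : ∀ᶠ y in 𝓝 x, G y ∈ t) : G'.det = 0 := by
  by_contra hdet
  have : CompleteSpace E := FiniteDimensional.complete 𝕜 E
  have surjective : (G' : E →ₗ[𝕜] E).range = ⊤ :=
    (LinearMap.equivOfDetNeZero (G' : E →ₗ[𝕜] E) hdet).range
  have image_mem_nhds : t ∈ 𝓝 (G x) := hG.map_nhds_eq_of_surj surjective ▸ hmem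
  exact notMem_empty _ (ht ▸ mem_interior_iff_mem_nhds.2 image_mem_nhds)

theorem not_eqOn_id_frontier_of_contDiffOn {G : E → E} (hs : IsCompact s) (hconv : Convex ℝ s)
    (hint : (interior s).Nonempty) (hG : ContDiffOn ℝ 1 G s) (hmaps : MapsTo G s (frontier s)) :
    ¬ EqOn G id (frontier s) := by
  intro hid
  let _ : MeasurableSpace E := borel E
  have : BorelSpace E := ⟨rfl⟩
  let μ : Measure E := Measure.addHaar
  have volume_eq := setIntegral_det_one_add_fderivWithin μ hs hconv hint (h := G - id)
    (hG.sub contDiffOn_id) fun x hx => sub_eq_zero.2 (hid hx)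
  have det_eq_zero (x : E) (hx : x ∈ interior s) :
      (1 + fderivWithin ℝ (G - id) s x).det = 0 := by
    have s_mem : s ∈ 𝓝 x := mem_interior_iff_mem_nhds.1 hx
    have strict := (hG.contDiffAt s_mem).hasStrictFDerivAt one_ne_zero
    have derivative : 1 + fderivWithin ℝ (G - id) s x = fderiv ℝ G x := by
      rw [fderivWithin_of_mem_nhds s_mem, (strict.hasFDerivAt.sub (hasFDerivAt_id x)).fderiv]
      exact add_sub_cancel (1 : E →L[ℝ] E) _
    rw [derivative]
    exact det_eq_zero_of_hasStrictFDerivAt_of_eventually_mem strict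
      (interior_frontier hs.isClosed) (eventually_of_mem s_mem hmaps)
  rw [← setIntegral_congr_set (interior_ae_eq_of_null_frontier (hconv.addHaar_frontier μ)),
    setIntegral_eq_zero_of_forall_eq_zero det_eq_zero] at volume_eq
  exact (ENNReal.toReal_pos (μ.measure_pos_of_nonempty_interior hint).ne'
    hs.measure_lt_top.ne).ne volume_eq

end Volume

section Brouwer

variable {E : Type*} [NormedAddCommGroup E] [InnerProductSpace ℝ E]

theorem exists_isFixedPt_of_hasCompactSupport [FiniteDimensional ℝ E] {f : E → E}
    (hf : Continuous f) (hsupp : HasCompactSupport f) : ∃ x, IsFixedPt f x := by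
  by_contra! hno
  obtain ⟨g, hg, hgf, hgsupp⟩ := hf.exists_contDiff_approx 1 (ε := fun x => dist x (f x))
    (by fun_prop) fun x => dist_pos.2 (Ne.symm (hno x))
  have displacement_ne_zero (x : E) : x - g x ≠ 0 := fun hx =>
    (hgf x).ne (by rw [← sub_eq_zero.1 hx])
  obtain ⟨R, hR, hsuppR⟩ := hsupp.isCompact.isBounded.subset_ball_lt 0 0
  have g_eq_zero (x : E) (hx : x ∈ sphere 0 R) : g x = 0 := by
    by_contra hgx
    have hxR := hsuppR (subset_tsupport f (hgsupp hgx))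
    exact (mem_ball.1 hxR).ne (mem_sphere.1 hx)
  let G : E → E := fun x => (R * ‖x - g x‖⁻¹) • (x - g x)
  have displacement_contDiff : ContDiff ℝ 1 fun x => x - g x := contDiff_id.sub hg
  have G_contDiff : ContDiff ℝ 1 G :=
    (contDiff_const.mul ((displacement_contDiff.norm ℝ displacement_ne_zero).inv fun x =>
      norm_ne_zero_iff.2 (displacement_ne_zero x))).smul displacement_contDiff
  have frontier_eq : frontier (closedBall (0 : E) R) = sphere 0 R := frontier_closedBall 0 hR.ne'
  refine not_eqOn_id_frontier_of_contDiffOn (G := G) (isCompact_closedBall 0 R)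
    (convex_closedBall 0 R) ⟨0, ball_subset_interior_closedBall (mem_ball_self hR)⟩
    G_contDiff.contDiffOn ?_ ?_
  · intro x _
    rw [frontier_eq, mem_sphere_zero_iff_norm, norm_smul, norm_mul, norm_inv, norm_norm,
      Real.norm_of_nonneg hR.le,
      inv_mul_cancel_right₀ (norm_ne_zero_iff.2 (displacement_ne_zero x))]
  · intro x hx
    rw [frontier_eq] at hx
    simp only [G, g_eq_zero x hx, sub_zero, mem_sphere_zero_iff_norm.1 hx, mul_inv_cancel₀ hR.ne',
      one_smul, id_eq]

theorem norm_sub_le_of_inner_nonpos {x y p q : E} (hp : inner ℝ (x - p) (q - p) ≤ 0)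
    (hq : inner ℝ (y - q) (p - q) ≤ 0) : ‖p - q‖ ≤ ‖x - y‖ := by
  have sq_le : ‖p - q‖ * ‖p - q‖ ≤ ‖x - y‖ * ‖p - q‖ := by
    calc ‖p - q‖ * ‖p - q‖
        = inner ℝ (x - y) (p - q) + inner ℝ (x - p) (q - p) + inner ℝ (y - q) (p - q) := by
          rw [← real_inner_self_eq_norm_mul_norm]
          simp only [inner_sub_left, inner_sub_right]
          ring
      _ ≤ inner ℝ (x - y) (p - q) := by linarith
      _ ≤ ‖x - y‖ * ‖p - q‖ := real_inner_le_norm _ _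
  rcases (norm_nonneg (p - q)).eq_or_lt with h | h
  · exact h ▸ norm_nonneg _
  · exact le_of_mul_le_mul_right sq_le h

theorem exists_lipschitzWith_one_retraction {K : Set E} (hne : K.Nonempty)
    (hcomplete : IsComplete K) (hconv : Convex ℝ K) :
    ∃ p : E → E, LipschitzWith 1 p ∧ (∀ x, p x ∈ K) ∧ EqOn p id K := by
  choose p hpK hpmin using exists_norm_eq_iInf_of_complete_convex hne hcomplete hconv
  have obtuse (x w : E) (hw : w ∈ K) : inner ℝ (x - p x) (w - p x) ≤ 0 :=
    (norm_eq_iInf_iff_real_inner_le_zero hconv (hpK x)).1 (hpmin x) w hw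
  refine ⟨p, LipschitzWith.of_dist_le_mul fun x y => ?_, hpK, fun x hx => ?_⟩
  · simpa only [dist_eq_norm, NNReal.coe_one, one_mul] using
      norm_sub_le_of_inner_nonpos (obtuse x _ (hpK y)) (obtuse y _ (hpK x))
  · exact (sub_eq_zero.1 (real_inner_self_nonpos.1 (obtuse x x hx))).symm

theorem exists_isFixedPt_of_convex_of_innerProductSpace [FiniteDimensional ℝ E] {K : Set E}
    (hne : K.Nonempty) (hK : IsCompact K) (hconv : Convex ℝ K) {f : E → E} (hmaps : MapsTo f K K)
    (hf : ContinuousOn f K) : ∃ x ∈ K, IsFixedPt f x := by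
  obtain ⟨p, hp, hpK, hpid⟩ := exists_lipschitzWith_one_retraction hne hK.isComplete hconv
  obtain ⟨R, hR, hKR⟩ := hK.isBounded.subset_ball_lt 0 0
  let χ : ContDiffBump (0 : E) := ⟨R, R + 1, hR, lt_add_one R⟩
  obtain ⟨x, hx⟩ := exists_isFixedPt_of_hasCompactSupport (f := fun x => χ x • f (p x))
    (χ.continuous.smul (hf.comp_continuous hp.continuous hpK)) χ.hasCompactSupport.smul_right
  have hfpK : f (p x) ∈ K := hmaps (hpK x)
  have x_mem : x ∈ closedBall 0 R := by
    rw [mem_closedBall_zero_iff]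
    calc ‖x‖ = χ x * ‖f (p x)‖ := by
          rw [← Real.norm_of_nonneg (χ.nonneg (x := x)), ← norm_smul, hx.eq]
      _ ≤ 1 * R := by
          gcongr
          · exact χ.le_one
          · exact (mem_ball_zero_iff.1 (hKR hfpK)).le
      _ = R := one_mul R
  have fixed : f (p x) = x := by
    simpa only [IsFixedPt, χ.one_of_mem_closedBall x_mem, one_smul] using hx
  have hxK : x ∈ K := fixed ▸ hfpK
  exact ⟨x, hxK, by rwa [hpid hxK] at fixed⟩

end Brouwer

section TopologicalVectorSpace

variable {Y : Type*} [AddCommGroup Y] [Module ℝ Y] [TopologicalSpace Y] [IsTopologicalAddGroup Y]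
  [ContinuousSMul ℝ Y] [T2Space Y] [FiniteDimensional ℝ Y] {A : Set Y}

theorem exists_isFixedPt_of_convex (hne : A.Nonempty) (hA : IsCompact A) (hconv : Convex ℝ A)
    {f : Y → Y} (hmaps : MapsTo f A A) (hf : ContinuousOn f A) : ∃ u ∈ A, IsFixedPt f u := by
  let E := EuclideanSpace ℝ (Fin (Module.finrank ℝ Y))
  let e : Y ≃L[ℝ] E := ContinuousLinearEquiv.ofFinrankEq finrank_euclideanSpace_fin.symm
  have symm_mapsTo : MapsTo e.symm (e '' A) A := by
    rintro _ ⟨u, hu, rfl⟩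
    rwa [e.symm_apply_apply]
  obtain ⟨_, ⟨u, hu, rfl⟩, hfix⟩ := exists_isFixedPt_of_convex_of_innerProductSpace
    (f := e ∘ f ∘ e.symm) (hne.image e) (hA.image e.continuous)
    (hconv.linear_image (e : Y →ₗ[ℝ] E))
    ((mapsTo_image e A).comp (hmaps.comp symm_mapsTo))
    (e.continuous.comp_continuousOn (hf.comp e.symm.continuous.continuousOn symm_mapsTo))
  refine ⟨u, hu, e.injective ?_⟩
  simpa only [IsFixedPt, comp_apply, e.symm_apply_apply] using hfix

theorem kannan_equicontraction_finiteDimensional_general {ζ : Type*} (hne : A.Nonempty)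
    (hA : IsCompact A) (hconv : Convex ℝ A) (C : Y → ζ) (T : Y → ζ → Y)
    (hmaps : ∀ u ∈ A, T u (C u) ∈ A) (hcont : ContinuousOn (fun u => T u (C u)) A) :
    ∃ u ∈ A, T u (C u) = u :=
  exists_isFixedPt_of_convex hne hA hconv hmaps hcont

end TopologicalVectorSpace

/-- The finite-dimensional case (via Darbo's theorem): if `Y` is a finite-dimensional
Banach space, `A ⊆ Y` nonempty, bounded, closed, convex, `C : A → ζ` a compact mapping,
and `T : A × C(A) → Y` a Kannan type equicontraction mapping such that
`η u = T u (C u)` maps `A` into `A` and is continuous, then `T (u, C u) = u`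
has a solution in `A`. -/
theorem kannan_equicontraction_finiteDimensional
    {Y : Type*} [NormedAddCommGroup Y] [NormedSpace ℝ Y] [CompleteSpace Y]
    [FiniteDimensional ℝ Y]
    {ζ : Type*} [MetricSpace ζ] [CompleteSpace ζ]
    (A : Set Y) (hA_ne : A.Nonempty) (hA_bdd : Bornology.IsBounded A)
    (hA_cl : IsClosed A) (hA_cv : Convex ℝ A)
    (C : Y → ζ)
    (hC_cont : ContinuousOn C A)
    (hC_cpt : IsCompact (closure (C '' A)))
    (T : Y → ζ → Y)
    (hT_kannan : ∃ k : ℝ, 0 ≤ k ∧ k < 1 / 2 ∧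
      ∀ u₁ ∈ A, ∀ u₂ ∈ A, ∀ v ∈ C '' A,
        ‖T u₁ v - T u₂ v‖ ≤ k * (‖T u₁ v - u₁‖ + ‖T u₂ v - u₂‖))
    (hη_maps : ∀ u ∈ A, T u (C u) ∈ A)
    (hη_cont : ContinuousOn (fun u => T u (C u)) A) :
    ∃ u ∈ A, T u (C u) = u :=
  kannan_equicontraction_finiteDimensional_general hA_ne
    (Metric.isCompact_of_isClosed_isBounded hA_cl hA_bdd) hA_cv C T hη_maps hη_cont
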